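/- arXiv:math/0211198 — 5 statements merged into one kernel-verified Lean document; each statement's English description precedes it below -/
import Mathlib

section
/- Let μ be a Young diagram with exactly n cells. Then Δ_μ(∂)Δ_μ is the constant polynomial n! · Π_{(r,c) ∈ cells(μ)} r!·c!; in particular Δ_μ(∂)Δ_μ ≠ 0, so Δ_μ ∉ K_μ and Δ_μ ≠ 0. -/
/-!
Expanding the determinant gives `Δ = ∑ σ, sign σ • Z ^ (e σ)`, where the exponent vector `e σ`
records the cell `T (σ s)` attached to the index `s`. As the cells are pairwise distinct, the
exponents `e σ` are pairwise distinct, so the `n!` terms do not cancel. They all have the same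
total degree, so for `σ ≠ τ` some variable occurs in `Z ^ (e σ)` with a larger exponent than in
`Z ^ (e τ)`, and the pair contributes nothing to `Δ(∂)Δ`. Each of the `n!` diagonal pairs
contributes `(sign σ)² ∏ i, (e σ i)! = ∏ r! c!`.
-/

open MvPolynomial

/-- `Δ_μ` for an enumeration `T : Fin n → ℕ × ℕ` of the cells of a Young diagram:
`Δ = det [X_s ^ c_t * Y_s ^ r_t]`, where `T t = (r_t, c_t)`, the `X`-variables are
indexed by `Sum.inl` and the `Y`-variables by `Sum.inr`. -/
noncomputable def Delta (n : ℕ) (T : Fin n → ℕ × ℕ) :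
    MvPolynomial (Fin n ⊕ Fin n) ℂ :=
  Matrix.det (Matrix.of fun s t : Fin n =>
    (X (Sum.inl s) : MvPolynomial (Fin n ⊕ Fin n) ℂ) ^ (T t).2 * X (Sum.inr s) ^ (T t).1)

/-- `diffOp f P = f(∂)P`: the result of applying to `P` the constant-coefficient
differential operator obtained from `f` by substituting `∂/∂Z_i` for each variable `Z_i`. -/
noncomputable def diffOp {ι : Type*} [Fintype ι] [DecidableEq ι]
    (f P : MvPolynomial ι ℂ) : MvPolynomial ι ℂ :=
  ∑ m ∈ f.support, ∑ m' ∈ P.support,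
    MvPolynomial.monomial (m' - m)
      (f.coeff m * P.coeff m' * ∏ i, ((m' i).descFactorial (m i) : ℂ))

/-- The operator `diffOp` evaluated at a sum of terms with distinct exponents of equal total degree:
distinct monomials of the same degree annihilate each other, so only the diagonal remains. -/
lemma diffOp_self_of_sum {ι κ : Type*} [Fintype ι] [DecidableEq ι] [Fintype κ]
    (e : κ → ι →₀ ℕ) (c : κ → ℂ) (he : Function.Injective e) (hc : ∀ a, c a ≠ 0)
    (d : ℕ) (hd : ∀ a, ∑ i, e a i = d) (P : MvPolynomial ι ℂ)
    (hP : P = ∑ a, monomial (e a) (c a)) :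
    diffOp P P = C (∑ a, c a * c a * ∏ i, ((e a i).factorial : ℂ)) := by
  classical
  have hcoeff (a : κ) : P.coeff (e a) = c a := by
    rw [hP, coeff_sum, Finset.sum_eq_single a]
    · simp
    · intro b _ hb
      rw [coeff_monomial, if_neg (fun h => hb (he h))]
    · simp
  have hsupp : P.support = Finset.univ.image e := by
    ext m
    simp only [Finset.mem_image, Finset.mem_univ, true_and]
    constructor
    · intro hm
      by_contra! hne
      rw [mem_support_iff] at hm
      apply hm
      rw [hP, coeff_sum]
      exact Finset.sum_eq_zero fun a _ => by rw [coeff_monomial, if_neg (hne a)]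
    · rintro ⟨a, rfl⟩
      rw [mem_support_iff, hcoeff]
      exact hc a
  unfold diffOp
  rw [hsupp, Finset.sum_image he.injOn, map_sum]
  refine Finset.sum_congr rfl fun a _ => ?_
  rw [Finset.sum_image he.injOn, Finset.sum_eq_single a]
  · simp [hcoeff, Nat.descFactorial_self, ← C_apply]
  · intro b _ hb
    obtain ⟨i, hi⟩ : ∃ i, e b i < e a i := by
      by_contra! hle
      apply hb
      apply he
      ext i
      have := (Finset.sum_eq_sum_iff_of_le fun i _ => hle i).1 ((hd a).trans (hd b).symm)
      exact (this i (Finset.mem_univ i)).symm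
    rw [Finset.prod_eq_zero (Finset.mem_univ i), mul_zero, monomial_zero]
    exact_mod_cast Nat.descFactorial_eq_zero_iff_lt.2 hi
  · simp

/-- The exponent vector of the term of `Delta n T` attached to the permutation `σ`. -/
noncomputable def deltaExp {n : ℕ} (T : Fin n → ℕ × ℕ) (σ : Equiv.Perm (Fin n)) :
    Fin n ⊕ Fin n →₀ ℕ :=
  Finsupp.equivFunOnFinite.symm (Sum.elim (fun s => (T (σ s)).2) (fun s => (T (σ s)).1))

lemma deltaExp_injective {n : ℕ} {T : Fin n → ℕ × ℕ} (hT : Function.Injective T) :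
    Function.Injective (deltaExp T) := by
  intro σ τ h
  ext1 s
  apply hT
  have h1 := DFunLike.congr_fun h (Sum.inl s)
  have h2 := DFunLike.congr_fun h (Sum.inr s)
  exact Prod.ext h2 h1

lemma Delta_eq_sum (n : ℕ) (T : Fin n → ℕ × ℕ) :
    Delta n T = ∑ σ : Equiv.Perm (Fin n),
      monomial (deltaExp T σ) (((Equiv.Perm.sign σ : ℤ) : ℂ)) := by
  rw [Delta, ← Matrix.det_transpose, Matrix.det_apply']
  refine Finset.sum_congr rfl fun σ _ => ?_
  rw [monomial_eq, Finsupp.prod_fintype _ _ (by simp), Fintype.prod_sum_type]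
  simp [deltaExp, Finset.prod_mul_distrib]

/-- `Δ_μ(∂)Δ_μ` is the nonzero constant `n! · ∏_{(r,c) ∈ μ} r! · c!`; in particular
`Δ_μ ∉ K_μ` and `Δ_μ ≠ 0`. -/
theorem stmt8 (n : ℕ) (hn : 1 ≤ n) (μ : YoungDiagram) (hμ : μ.cells.card = n)
    (T : Fin n ≃ {x // x ∈ μ.cells}) :
    diffOp (Delta n (fun t => (T t).val)) (Delta n (fun t => (T t).val)) =
        MvPolynomial.C ((n.factorial : ℂ) *
          ∏ x ∈ μ.cells, ((x.1.factorial : ℂ) * (x.2.factorial : ℂ))) ∧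
      diffOp (Delta n (fun t => (T t).val)) (Delta n (fun t => (T t).val)) ≠ 0 ∧
      Delta n (fun t => (T t).val) ≠ 0 := by
  set T' : Fin n → ℕ × ℕ := fun t => (T t).val with hT'
  have hinj : Function.Injective T' := Subtype.val_injective.comp T.injective
  have hprod (f : ℕ × ℕ → ℂ) (σ : Equiv.Perm (Fin n)) :
      ∏ s, f (T' (σ s)) = ∏ x ∈ μ.cells, f x := by
    rw [← Finset.prod_coe_sort μ.cells]
    exact Equiv.prod_comp (σ.trans T) fun x => f x.val
  have hmain : diffOp (Delta n T') (Delta n T') =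
      C ((n.factorial : ℂ) *
        ∏ x ∈ μ.cells, ((x.1.factorial : ℂ) * (x.2.factorial : ℂ))) := by
    rw [diffOp_self_of_sum (deltaExp T') (fun σ => ((Equiv.Perm.sign σ : ℤ) : ℂ))
      (deltaExp_injective hinj) (fun σ => by simp)
      (∑ s, (T' s).2 + ∑ s, (T' s).1) ?_ _ (Delta_eq_sum n T')]
    · congr 1
      have hterm (σ : Equiv.Perm (Fin n)) :
          ((Equiv.Perm.sign σ : ℤ) : ℂ) * ((Equiv.Perm.sign σ : ℤ) : ℂ) *
            ∏ i, ((deltaExp T' σ i).factorial : ℂ) =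
          ∏ x ∈ μ.cells, ((x.1.factorial : ℂ) * (x.2.factorial : ℂ)) := by
        have hsign : ((Equiv.Perm.sign σ : ℤ) : ℂ) * ((Equiv.Perm.sign σ : ℤ) : ℂ) = 1 := by
          rw [← Int.cast_mul, Int.units_coe_mul_self, Int.cast_one]
        rw [hsign, one_mul, Fintype.prod_sum_type, Finset.prod_mul_distrib,
          ← hprod (fun x => (x.1.factorial : ℂ)) σ, ← hprod (fun x => (x.2.factorial : ℂ)) σ,
          mul_comm]
        rfl
      rw [Finset.sum_congr rfl fun σ _ => hterm σ, Finset.sum_const, Finset.card_univ,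
        Fintype.card_perm, Fintype.card_fin, nsmul_eq_mul]
    · intro σ
      rw [Fintype.sum_sum_type]
      exact congrArg₂ (· + ·) (Equiv.sum_comp σ fun s => (T' s).2)
        (Equiv.sum_comp σ fun s => (T' s).1)
  have hne : diffOp (Delta n T') (Delta n T') ≠ 0 := by
    rw [hmain, Ne, C_eq_zero]
    refine mul_ne_zero (by exact_mod_cast n.factorial_ne_zero) ?_
    exact Finset.prod_ne_zero_iff.2 fun x _ => mul_ne_zero
      (by exact_mod_cast x.1.factorial_ne_zero) (by exact_mod_cast x.2.factorial_ne_zero)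
  refine ⟨hmain, hne, fun h0 => hne ?_⟩
  rw [h0]
  simp [diffOp]
end

section
/- Let μ be a Young diagram with exactly n cells, and set d₁ = Σ_{(r,c) ∈ cells(μ)} c and d₂ = Σ_{(r,c) ∈ cells(μ)} r. If f ∈ R_n is bihomogeneous of bidegree (d₁, d₂) (every monomial of f has total X-degree d₁ and total Y-degree d₂), then there exists a scalar c ∈ ℂ such that f − c·Δ_μ ∈ K_μ. In other words, the bigraded component of A_μ = R_n/K_μ of bidegree (d₁,d₂) is at most one-dimensional, spanned by the image of Δ_μ. -/
/-! On polynomials `g` and `P` that are both homogeneous of the same degree, `g(∂)P` is the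
constant `⟨g, P⟩ = ∑ m, g_m P_m m!`: a monomial `∂^m` sends a monomial of the same degree to
zero unless the two exponents agree (`diffOp_eq_C`). The polynomial `Δ` is homogeneous of degree
`d₁ + d₂` (`Delta_isHomogeneous`) and has real coefficients (`Delta_coeff_real`), so
`⟨Δ, Δ⟩` is a sum of positive terms, one for each monomial of `Δ` (`pairing_Delta_self_ne_zero`).
Hence `c = ⟨f, Δ⟩ / ⟨Δ, Δ⟩` works; when `Δ = 0` every operator annihilates it. -/

open MvPolynomial

/-- The bilinear pairing `⟨g, P⟩ = ∑ m, g_m P_m m!`, summed over the support of `P`. -/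
noncomputable def pairing {ι : Type*} [Fintype ι] (g P : MvPolynomial ι ℂ) : ℂ :=
  ∑ m ∈ P.support, g.coeff m * P.coeff m * ∏ i, ((m i).factorial : ℂ)

lemma pairing_sub_smul {ι : Type*} [Fintype ι] (f g P : MvPolynomial ι ℂ) (c : ℂ) :
    pairing (f - c • g) P = pairing f P - c * pairing g P := by
  simp only [pairing, Finset.mul_sum, ← Finset.sum_sub_distrib, coeff_sub, coeff_smul, smul_eq_mul]
  exact Finset.sum_congr rfl fun m _ => by ring

lemma weight_one_eq_sum {ι : Type*} [Fintype ι] (m : ι →₀ ℕ) :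
    Finsupp.weight (1 : ι → ℕ) m = ∑ i, m i := by
  rw [← Finsupp.degree_eq_sum, Finsupp.degree_eq_weight_one]
  rfl

/-- If `∂^a` does not kill the monomial with exponent `b` of the same degree as `a`, then `a ≤ b`,
hence `a = b`; only constant terms survive. -/
lemma diffOp_eq_C {ι : Type*} [Fintype ι] [DecidableEq ι] (g P : MvPolynomial ι ℂ) (d : ℕ)
    (hg : g.IsHomogeneous d) (hP : P.IsHomogeneous d) :
    diffOp g P = C (pairing g P) := by
  have key : ∀ m ∈ g.support, ∀ m' ∈ P.support,
      (monomial (m' - m) (g.coeff m * P.coeff m' * ∏ i, ((m' i).descFactorial (m i) : ℂ)) :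
        MvPolynomial ι ℂ)
      = if m' = m then C (g.coeff m' * P.coeff m' * ∏ i, ((m' i).factorial : ℂ)) else 0 := by
    intro m hm m' hm'
    split_ifs with h
    · subst h
      simp only [Nat.descFactorial_self, tsub_self]
      rfl
    · obtain ⟨i, hi⟩ : ∃ i, m' i < m i := by
        by_contra! hle
        have h1 : Finsupp.weight 1 m = d := hg (mem_support_iff.1 hm)
        have h2 : Finsupp.weight 1 m' = d := hP (mem_support_iff.1 hm')
        rw [weight_one_eq_sum] at h1 h2
        refine h (Finsupp.ext fun i => ?_)
        exact ((Finset.sum_eq_sum_iff_of_le fun i _ => hle i).1 (h1.trans h2.symm) i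
          (Finset.mem_univ i)).symm
      have h0 : ∏ i, ((m' i).descFactorial (m i) : ℂ) = 0 :=
        Finset.prod_eq_zero (Finset.mem_univ i)
          (by exact_mod_cast Nat.descFactorial_eq_zero_iff_lt.2 hi)
      rw [h0, mul_zero, monomial_zero]
  unfold diffOp pairing
  rw [Finset.sum_congr rfl fun m hm => Finset.sum_congr rfl fun m' hm' => key m hm m' hm',
    Finset.sum_comm, map_sum]
  refine Finset.sum_congr rfl fun m' _ => ?_
  rw [Finset.sum_ite_eq]
  split_ifs with h
  · rfl
  · simp [notMem_support_iff.1 h]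

lemma Delta_isHomogeneous (n : ℕ) (T : Fin n → ℕ × ℕ) :
    (Delta n T).IsHomogeneous (∑ t, ((T t).2 + (T t).1)) := by
  unfold Delta
  rw [Matrix.det_apply]
  refine IsHomogeneous.sum _ _ _ fun σ _ => ?_
  have h : (∏ i, Matrix.of (fun s t : Fin n =>
      (X (Sum.inl s) : MvPolynomial (Fin n ⊕ Fin n) ℂ) ^ (T t).2 * X (Sum.inr s) ^ (T t).1)
        (σ i) i).IsHomogeneous (∑ t, ((T t).2 + (T t).1)) :=
    IsHomogeneous.prod _ _ _ fun t _ => (isHomogeneous_X_pow _ _).mul (isHomogeneous_X_pow _ _)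
  rcases Int.units_eq_one_or (Equiv.Perm.sign σ) with hs | hs
  · simpa [hs] using h
  · simpa [hs] using h.neg

/-- The coefficients are real because `Δ` is fixed by complex conjugation of coefficients. -/
lemma Delta_coeff_real (n : ℕ) (T : Fin n → ℕ × ℕ) (m : Fin n ⊕ Fin n →₀ ℕ) :
    (((Delta n T).coeff m).re : ℂ) = (Delta n T).coeff m := by
  have h : map (starRingEnd ℂ) (Delta n T) = Delta n T := by
    unfold Delta
    rw [RingHom.map_det]
    congr 1
    ext1 s t
    simp
  rw [← Complex.conj_eq_iff_re, ← coeff_map, h]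

lemma pairing_Delta_self_ne_zero (n : ℕ) (T : Fin n → ℕ × ℕ) (h : Delta n T ≠ 0) :
    pairing (Delta n T) (Delta n T) ≠ 0 := by
  have hr : pairing (Delta n T) (Delta n T) =
      ((∑ m ∈ (Delta n T).support, ((Delta n T).coeff m).re * ((Delta n T).coeff m).re *
        ∏ i, ((m i).factorial : ℝ) : ℝ) : ℂ) := by
    unfold pairing
    push_cast
    simp only [Delta_coeff_real]
  rw [hr, Complex.ofReal_ne_zero]
  refine (Finset.sum_pos (fun m hm => ?_) (support_nonempty.2 h)).ne'
  have h0 : ((Delta n T).coeff m).re ≠ 0 := by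
    intro h0
    have := Delta_coeff_real n T m
    rw [h0, Complex.ofReal_zero] at this
    exact mem_support_iff.1 hm this.symm
  exact mul_pos (mul_self_pos.2 h0) (Finset.prod_pos fun i _ => by positivity)

/-- Any polynomial which is bihomogeneous of the top bidegree `(d₁, d₂)` is congruent
to a scalar multiple of `Δ_μ` modulo `K_μ`: the bigraded component `A_μ^{(d₁,d₂)}` is
(at most) one-dimensional, spanned by the image of `Δ_μ`. -/
theorem stmt9 (n : ℕ) (hn : 1 ≤ n) (μ : YoungDiagram) (hμ : μ.cells.card = n)
    (T : Fin n ≃ {x // x ∈ μ.cells})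
    (f : MvPolynomial (Fin n ⊕ Fin n) ℂ)
    (hbihom : ∀ m ∈ f.support,
      (∑ s : Fin n, m (Sum.inl s)) = (∑ x ∈ μ.cells, x.2) ∧
      (∑ s : Fin n, m (Sum.inr s)) = (∑ x ∈ μ.cells, x.1)) :
    ∃ c : ℂ, diffOp (f - c • Delta n (fun t => (T t).val))
      (Delta n (fun t => (T t).val)) = 0 := by
  set D := Delta n (fun t => (T t).val) with hD
  by_cases h0 : D = 0
  · exact ⟨0, by simp [h0, diffOp]⟩
  have hsum : ∑ t, ((T t).val.2 + (T t).val.1) = ∑ x ∈ μ.cells, (x.2 + x.1) := by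
    rw [T.sum_comp (fun x => x.val.2 + x.val.1)]
    exact Finset.sum_coe_sort μ.cells fun x => x.2 + x.1
  have hDhom : D.IsHomogeneous (∑ x ∈ μ.cells, (x.2 + x.1)) :=
    hsum ▸ Delta_isHomogeneous n fun t => (T t).val
  have hf : f.IsHomogeneous (∑ x ∈ μ.cells, (x.2 + x.1)) := by
    intro m hm
    obtain ⟨h1, h2⟩ := hbihom m (mem_support_iff.2 hm)
    rw [weight_one_eq_sum, Fintype.sum_sum_type, h1, h2,
      Finset.sum_add_distrib]
  refine ⟨pairing f D / pairing D D, ?_⟩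
  have hcD : ((pairing f D / pairing D D) • D).IsHomogeneous (∑ x ∈ μ.cells, (x.2 + x.1)) :=
    (homogeneousSubmodule _ ℂ _).smul_mem _ hDhom
  rw [diffOp_eq_C _ _ _ (hf.sub hcD) hDhom, pairing_sub_smul,
    div_mul_cancel₀ _ (pairing_Delta_self_ne_zero n _ h0), sub_self, C_0]
end

section
/- Let V = Π_{1 ≤ s < t ≤ n}(Z_t − Z_s) ∈ ℂ[Z_1,…,Z_n] be the Vandermonde polynomial. Then { f ∈ ℂ[Z_1,…,Z_n] : f(∂)V = 0 } equals the ideal I of ℂ[Z_1,…,Z_n] generated by the elementary symmetric polynomials e_1,…,e_n in Z_1,…,Z_n. -/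
/-! Write `V` for the Vandermonde polynomial, `J = {f | f(∂)V = 0}`, and `I` for the ideal generated
by `e₁, …, eₙ`. Since `(fg)(∂) = f(∂)g(∂)`, the set `J` is an ideal.

`I ≤ J`: the polynomial `e_k(∂)V` changes sign under transpositions, so it is divisible by `V`;
as its degree is smaller than that of `V`, it vanishes.

`J ≤ I`: every `X i ^ n` lies in `I`, so a power of `(X 1, …, X n)` does, and by descending
induction it suffices to treat `f ∈ J` with `X i * f ∈ I` for all `i`. Applying the divided
difference of a transposition `s` of `i` and `j`, which preserves `I`, to `(X i - X j) * f` gives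
`f + s f ∈ I`. Hence `n! f` is congruent modulo `I` to the antisymmetrization of `f`, which is
`V * g` with `g` symmetric, and `g` is congruent to a constant by the fundamental theorem on
symmetric polynomials. So `n! f ≡ c V`, and then `c V(∂)V = 0`; but the constant term of `V(∂)V` is
`∑ c_m² m! > 0`, where the `c_m` are the (integer) coefficients of `V`. Therefore `c = 0`
and `f ∈ I`. -/

open MvPolynomial

/-- The Vandermonde polynomial `V = ∏_{s < t} (Z_t - Z_s)` in `ℂ[Z₁,…,Zₙ]`. -/
noncomputable def vandermondePoly (n : ℕ) : MvPolynomial (Fin n) ℂ :=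
  ∏ p ∈ Finset.univ.filter (fun p : Fin n × Fin n => p.1 < p.2),
    ((X p.2 : MvPolynomial (Fin n) ℂ) - X p.1)

/-! ### Constant-coefficient differential operators -/

section DiffOp

variable {ι : Type*} [Fintype ι] [DecidableEq ι]

/-- The defining sum may be taken over any finite sets containing the two supports. -/
theorem diffOp_eq_sum (f P : MvPolynomial ι ℂ) {S T : Finset (ι →₀ ℕ)}
    (hS : f.support ⊆ S) (hT : P.support ⊆ T) :
    diffOp f P = ∑ m ∈ S, ∑ m' ∈ T, MvPolynomial.monomial (m' - m)
      (f.coeff m * P.coeff m' * ∏ i, ((m' i).descFactorial (m i) : ℂ)) := by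
  unfold diffOp
  rw [Finset.sum_subset hS]
  · refine Finset.sum_congr rfl fun m _ => Finset.sum_subset hT fun m' _ h => ?_
    rw [notMem_support_iff.1 h]; simp
  · intro m _ h
    rw [notMem_support_iff.1 h]; simp

theorem diffOp_add_left (f g P : MvPolynomial ι ℂ) :
    diffOp (f + g) P = diffOp f P + diffOp g P := by
  rw [diffOp_eq_sum (f + g) P support_add subset_rfl,
    diffOp_eq_sum f P (Finset.subset_union_left (s₂ := g.support)) subset_rfl,
    diffOp_eq_sum g P (Finset.subset_union_right (s₁ := f.support)) subset_rfl]
  simp only [← Finset.sum_add_distrib, coeff_add, add_mul, map_add]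

theorem diffOp_add_right (f P Q : MvPolynomial ι ℂ) :
    diffOp f (P + Q) = diffOp f P + diffOp f Q := by
  rw [diffOp_eq_sum f (P + Q) subset_rfl support_add,
    diffOp_eq_sum f P subset_rfl (Finset.subset_union_left (s₂ := Q.support)),
    diffOp_eq_sum f Q subset_rfl (Finset.subset_union_right (s₁ := P.support))]
  simp only [← Finset.sum_add_distrib, coeff_add, add_mul, mul_add, map_add]

theorem diffOp_zero_left (P : MvPolynomial ι ℂ) : diffOp 0 P = 0 := by
  simp [diffOp]

theorem diffOp_zero_right (f : MvPolynomial ι ℂ) : diffOp f 0 = 0 := by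
  simp [diffOp]

theorem diffOp_monomial (m m' : ι →₀ ℕ) (a b : ℂ) :
    diffOp (monomial m a) (monomial m' b) = monomial (m' - m)
      (a * b * ∏ i, ((m' i).descFactorial (m i) : ℂ)) := by
  rw [diffOp_eq_sum _ _ support_monomial_subset support_monomial_subset]
  simp

theorem diffOp_neg_right (f P : MvPolynomial ι ℂ) : diffOp f (-P) = -diffOp f P := by
  rw [eq_neg_iff_add_eq_zero, ← diffOp_add_right, neg_add_cancel, diffOp_zero_right]

/-- Constant-coefficient operators compose: `(fg)(∂) = f(∂) g(∂)`. -/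
theorem diffOp_mul (f g P : MvPolynomial ι ℂ) :
    diffOp (f * g) P = diffOp f (diffOp g P) := by
  induction f using MvPolynomial.induction_on' with
  | add f₁ f₂ h₁ h₂ => rw [add_mul, diffOp_add_left, h₁, h₂, diffOp_add_left]
  | monomial m a =>
    induction g using MvPolynomial.induction_on' with
    | add g₁ g₂ h₁ h₂ =>
      rw [mul_add, diffOp_add_left, h₁, h₂, diffOp_add_left, diffOp_add_right]
    | monomial k b =>
      induction P using MvPolynomial.induction_on' with
      | add P₁ P₂ h₁ h₂ => rw [diffOp_add_right, h₁, h₂, ← diffOp_add_right, ← diffOp_add_right]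
      | monomial l c =>
        rw [monomial_mul, diffOp_monomial, diffOp_monomial, diffOp_monomial]
        have h : ∀ i, ((l i).descFactorial ((m + k) i) : ℂ) =
            (((l - k) i).descFactorial (m i) : ℂ) * ((l i).descFactorial (k i) : ℂ) := by
          intro i
          rw [← Nat.cast_mul, Finsupp.add_apply, ← Nat.descFactorial_mul_descFactorial (Nat.le_add_left (k i) (m i))]
          simp
        simp only [h, Finset.prod_mul_distrib]
        rw [tsub_tsub, add_comm m k]
        congr 1
        ring

/-- Permuting the variables of the operator and of its argument permutes those of the result. -/
theorem diffOp_rename (σ : Equiv.Perm ι) (f P : MvPolynomial ι ℂ) :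
    diffOp (rename σ f) (rename σ P) = rename σ (diffOp f P) := by
  induction f using MvPolynomial.induction_on' with
  | add f₁ f₂ h₁ h₂ => rw [map_add, diffOp_add_left, h₁, h₂, diffOp_add_left, map_add]
  | monomial m a =>
    induction P using MvPolynomial.induction_on' with
    | add P₁ P₂ h₁ h₂ => rw [map_add, diffOp_add_right, h₁, h₂, diffOp_add_right, map_add]
    | monomial l c =>
      simp only [rename_monomial, diffOp_monomial]
      congr 1
      · have h : Finsupp.mapDomain σ l - Finsupp.mapDomain σ m =
            Finsupp.mapDomain σ (l - m) := by
          ext i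
          simp only [Finsupp.tsub_apply, Finsupp.mapDomain_equiv_apply]
        rw [h]
      · congr 1
        simp only [Finsupp.mapDomain_equiv_apply]
        exact Equiv.prod_comp σ.symm fun i => ((l i).descFactorial (m i) : ℂ)

/-- If `f` has no constant term then `f(∂)` strictly lowers the total degree. -/
theorem degree_lt_of_mem_support_diffOp {f P : MvPolynomial ι ℂ} (hf : f.coeff 0 = 0)
    {d : ι →₀ ℕ} (hd : d ∈ (diffOp f P).support) : d.degree < P.totalDegree := by
  rw [mem_support_iff, diffOp, coeff_sum] at hd
  obtain ⟨m, hm, hd⟩ := Finset.exists_ne_zero_of_sum_ne_zero hd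
  rw [coeff_sum] at hd
  obtain ⟨m', hm', hd⟩ := Finset.exists_ne_zero_of_sum_ne_zero hd
  rw [coeff_monomial] at hd
  split_ifs at hd with h
  · have h1 := Finset.prod_ne_zero_iff.1 (right_ne_zero_of_mul hd)
    have hle : m ≤ m' := fun i => by
      by_contra hlt
      exact h1 i (Finset.mem_univ i) (by
        rw [Nat.descFactorial_eq_zero_iff_lt.2 (not_le.1 hlt), Nat.cast_zero])
    have hm0 : m ≠ 0 := by
      rintro rfl
      exact mem_support_iff.1 hm hf
    have h2 : m'.degree = d.degree + m.degree := by
      rw [← map_add, ← h, tsub_add_cancel_of_le hle]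
    have h3 : m.degree ≠ 0 := fun h => hm0 ((Finsupp.degree_eq_zero_iff m).1 h)
    have h4 : m'.degree ≤ P.totalDegree := le_totalDegree hm'
    omega
  · exact absurd rfl hd

theorem coeff_zero_diffOp (f P : MvPolynomial ι ℂ) :
    (diffOp f P).coeff 0 =
      ∑ m ∈ f.support, f.coeff m * P.coeff m * ∏ i, ((m i).factorial : ℂ) := by
  rw [diffOp, coeff_sum]
  refine Finset.sum_congr rfl fun m _ => ?_
  rw [coeff_sum, Finset.sum_eq_single m]
  · simp only [tsub_self, coeff_monomial, if_pos, Nat.descFactorial_self]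
  · intro m' _ hne
    rw [coeff_monomial]
    split_ifs with h
    · have : ∃ i, m' i < m i := by
        by_contra! hle
        exact hne (le_antisymm (tsub_eq_zero_iff_le.1 h) hle)
      obtain ⟨i, hi⟩ := this
      rw [Finset.prod_eq_zero (Finset.mem_univ i), mul_zero]
      rw [Nat.descFactorial_eq_zero_iff_lt.2 hi, Nat.cast_zero]
    · rfl
  · intro h
    rw [notMem_support_iff.1 h]; simp

end DiffOp

/-! ### Divisibility by the Vandermonde polynomial -/

section Vandermonde

variable {n : ℕ}

theorem vandermondePoly_eq_det (n : ℕ) : vandermondePoly n =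
    (Matrix.vandermonde (fun i : Fin n => (X i : MvPolynomial (Fin n) ℂ))).det := by
  rw [Matrix.det_vandermonde, vandermondePoly, Finset.prod_filter, ← Finset.univ_product_univ,
    Finset.prod_product]
  refine Finset.prod_congr rfl fun i _ => ?_
  rw [← Finset.prod_filter]
  exact Finset.prod_congr (by ext j; simp) fun _ _ => rfl

theorem vandermondePoly_ne_zero (n : ℕ) : vandermondePoly n ≠ 0 := by
  rw [vandermondePoly_eq_det, Matrix.det_vandermonde_ne_zero_iff]
  exact X_injective

/-- A polynomial which changes sign under every transposition of the variables. -/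
def IsAlternatingPoly (h : MvPolynomial (Fin n) ℂ) : Prop :=
  ∀ i j, i ≠ j → rename (Equiv.swap i j) h = -h

theorem isAlternatingPoly_vandermondePoly (n : ℕ) : IsAlternatingPoly (vandermondePoly n) := by
  intro i j hij
  have := Matrix.det_permute (Equiv.swap i j)
    (Matrix.vandermonde (fun i : Fin n => (X i : MvPolynomial (Fin n) ℂ)))
  rw [Equiv.Perm.sign_swap hij, Units.val_neg, Units.val_one, Int.cast_neg, Int.cast_one,
    neg_one_mul] at this
  rw [vandermondePoly_eq_det, AlgHom.map_det]
  convert! this using 2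
  · ext a b : 2
    simp [Matrix.vandermonde_apply]

/-- The substitution `X i ↦ X j`, with kernel generated by `X i - X j`. -/
noncomputable def identify (i j : Fin n) :
    MvPolynomial (Fin n) ℂ →ₐ[ℂ] MvPolynomial (Fin n) ℂ :=
  aeval fun k => X (if k = i then j else k)

theorem X_sub_X_dvd_iff (i j : Fin n) (p : MvPolynomial (Fin n) ℂ) :
    (X i - X j : MvPolynomial (Fin n) ℂ) ∣ p ↔ identify i j p = 0 := by
  constructor
  · rintro ⟨q, rfl⟩
    rw [map_mul]
    simp [identify]
  · intro h
    let K : Ideal (MvPolynomial (Fin n) ℂ) := Ideal.span {X i - X j}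
    have key : (Ideal.Quotient.mkₐ ℂ K).comp (identify i j) = Ideal.Quotient.mkₐ ℂ K := by
      ext k
      simp only [identify, AlgHom.comp_apply, aeval_X]
      split_ifs with hk
      · subst hk
        refine (Ideal.Quotient.eq.2 ?_).symm
        exact Ideal.mem_span_singleton_self _
      · rfl
    have h2 := DFunLike.congr_fun key p
    rw [AlgHom.comp_apply, h, map_zero] at h2
    exact Ideal.mem_span_singleton.1 (Ideal.Quotient.eq_zero_iff_mem.1 h2.symm)

theorem X_sub_X_dvd_sub_swap (i j : Fin n) (p : MvPolynomial (Fin n) ℂ) :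
    (X i - X j : MvPolynomial (Fin n) ℂ) ∣ p - rename (Equiv.swap i j) p := by
  rw [X_sub_X_dvd_iff, map_sub, sub_eq_zero]
  have key : identify i j = (identify i j).comp (rename (Equiv.swap i j)) := by
    ext k
    simp only [identify, AlgHom.comp_apply, aeval_X, rename_X]
    by_cases h1 : k = i
    · subst h1; simp
    · by_cases h2 : k = j
      · subst h2; simp
      · rw [Equiv.swap_apply_of_ne_of_ne h1 h2]
  exact DFunLike.congr_fun key p

theorem X_sub_X_ne_zero {i j : Fin n} (h : i ≠ j) :
    (X i - X j : MvPolynomial (Fin n) ℂ) ≠ 0 :=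
  sub_ne_zero.2 fun e => h (X_injective e)

theorem prime_X_sub_X {i j : Fin n} (h : i ≠ j) :
    Prime (X i - X j : MvPolynomial (Fin n) ℂ) := by
  refine ⟨X_sub_X_ne_zero h, fun hu => ?_, fun a b hab => ?_⟩
  · have := (X_sub_X_dvd_iff i j 1).1 hu.dvd
    rw [map_one] at this
    exact one_ne_zero this
  · simpa only [X_sub_X_dvd_iff, map_mul, mul_eq_zero] using hab

/-- The factors `X j - X i` of `V` are pairwise non-associated primes, and each divides a
polynomial that changes sign when `X i` and `X j` are swapped. -/
theorem vandermondePoly_dvd {h : MvPolynomial (Fin n) ℂ} (hh : IsAlternatingPoly h) :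
    vandermondePoly n ∣ h := by
  rw [vandermondePoly]
  refine Finset.prod_dvd_of_isRelPrime ?_ ?_
  · rintro ⟨i, j⟩ hij ⟨k, l⟩ hkl hne
    simp only [Finset.coe_filter, Finset.mem_univ, true_and, Set.mem_ofPred_eq] at hij hkl
    refine (prime_X_sub_X hij.ne').irreducible.isRelPrime_iff_not_dvd.2 ?_
    rw [X_sub_X_dvd_iff]
    intro h0
    simp only [identify, map_sub, aeval_X, sub_eq_zero] at h0
    have h1 := X_injective h0
    apply hne
    ext1 <;> split_ifs at h1 <;> grind
  · rintro ⟨i, j⟩ hij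
    have hij : i < j := by simpa using hij
    have h1 := X_sub_X_dvd_sub_swap j i h
    rw [hh j i hij.ne', sub_neg_eq_add, ← two_mul] at h1
    refine ((prime_X_sub_X hij.ne').dvd_or_dvd h1).resolve_left fun h2 => ?_
    rw [X_sub_X_dvd_iff, map_ofNat] at h2
    exact two_ne_zero h2

/-- The constant term of `V(∂)V` is `∑ c_m² m!`, a sum of positive reals over the support of `V`, because the
coefficients `c_m` of `V` are integers. -/
theorem coeff_zero_diffOp_vandermondePoly (n : ℕ) :
    (diffOp (vandermondePoly n) (vandermondePoly n)).coeff 0 ≠ 0 := by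
  obtain ⟨W, hW⟩ : ∃ W : MvPolynomial (Fin n) ℤ,
      map (Int.castRingHom ℂ) W = vandermondePoly n :=
    ⟨∏ p ∈ Finset.univ.filter (fun p : Fin n × Fin n => p.1 < p.2), (X p.2 - X p.1), by
      simp [vandermondePoly, map_prod]⟩
  have hc : ∀ m, (vandermondePoly n).coeff m = ((W.coeff m : ℤ) : ℂ) := fun m => by
    rw [← hW, coeff_map]; rfl
  obtain ⟨m₀, hm₀⟩ := support_nonempty.2 (vandermondePoly_ne_zero n)
  rw [coeff_zero_diffOp]
  have hpos : 0 < ∑ m ∈ (vandermondePoly n).support,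
      W.coeff m * W.coeff m * ∏ i, ((m i).factorial : ℤ) := by
    refine Finset.sum_pos (fun m hm => ?_) ⟨m₀, hm₀⟩
    have h1 : W.coeff m ≠ 0 := fun h => by
      rw [mem_support_iff, hc, h] at hm
      exact hm Int.cast_zero
    exact mul_pos (mul_self_pos.2 h1)
      (Finset.prod_pos fun i _ => by exact_mod_cast Nat.factorial_pos _)
  have := (Int.cast_ne_zero (α := ℂ)).2 hpos.ne'
  push_cast at this
  simpa only [hc] using this

end Vandermonde

/-! ### The ideal of positive-degree symmetric polynomials -/

section Coinvariants

variable {n : ℕ}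

/-- The ideal generated by the elementary symmetric polynomials of positive degree. -/
noncomputable def esymmIdeal (n : ℕ) : Ideal (MvPolynomial (Fin n) ℂ) :=
  Ideal.span ((fun k => esymm (Fin n) ℂ k) '' Set.Icc 1 n)

theorem esymm_mem_esymmIdeal {k : ℕ} (h1 : 1 ≤ k) (h2 : k ≤ n) :
    esymm (Fin n) ℂ k ∈ esymmIdeal n :=
  Ideal.subset_span ⟨k, ⟨h1, h2⟩, rfl⟩

/-- The annihilator of `V` under the action of polynomials as differential operators. -/
noncomputable def annVandermonde (n : ℕ) : Ideal (MvPolynomial (Fin n) ℂ) where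
  carrier := {f | diffOp f (vandermondePoly n) = 0}
  add_mem' {f g} hf hg := by
    rw [Set.mem_ofPred_eq] at *
    rw [diffOp_add_left, hf, hg, add_zero]
  zero_mem' := diffOp_zero_left _
  smul_mem' c f hf := by
    rw [Set.mem_ofPred_eq] at *
    rw [smul_eq_mul, diffOp_mul, hf, diffOp_zero_right]

theorem mem_annVandermonde {f : MvPolynomial (Fin n) ℂ} :
    f ∈ annVandermonde n ↔ diffOp f (vandermondePoly n) = 0 := Iff.rfl

/-- For symmetric `f` without constant term, `f(∂)V` is antisymmetric, hence a multiple of `V`,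
but of smaller degree than `V`. -/
theorem esymmIdeal_le_annVandermonde (n : ℕ) : esymmIdeal n ≤ annVandermonde n := by
  refine Ideal.span_le.2 ?_
  rintro _ ⟨k, ⟨hk1, hkn⟩, rfl⟩
  change diffOp (esymm (Fin n) ℂ k) (vandermondePoly n) = 0
  set h := diffOp (esymm (Fin n) ℂ k) (vandermondePoly n) with hdef
  have hanti : IsAlternatingPoly h := fun i j hij => by
    rw [hdef, ← diffOp_rename, isAlternatingPoly_vandermondePoly n i j hij, rename_esymm,
      diffOp_neg_right]
  have h0 : (esymm (Fin n) ℂ k).coeff 0 = 0 := by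
    change constantCoeff (esymm (Fin n) ℂ k) = 0
    rw [esymm, map_sum]
    refine Finset.sum_eq_zero fun t ht => ?_
    obtain ⟨i, hi⟩ := Finset.card_pos.1 (hk1.trans_eq (Finset.mem_powersetCard.1 ht).2.symm)
    rw [map_prod]
    exact Finset.prod_eq_zero hi (by simp)
  by_contra hne
  obtain ⟨g, hg⟩ := vandermondePoly_dvd hanti
  have hg0 : g ≠ 0 := by rintro rfl; exact hne (by rw [hg, mul_zero])
  have hdeg := totalDegree_mul_of_isDomain (vandermondePoly_ne_zero n) hg0
  obtain ⟨d, hd, hd'⟩ := Finset.exists_mem_eq_sup h.support (support_nonempty.2 hne)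
    (fun s => s.sum fun _ e => e)
  have h1 := degree_lt_of_mem_support_diffOp h0 hd
  have h2 : h.totalDegree = d.degree := hd'
  rw [← hg] at hdeg
  omega

theorem X_pow_mem_esymmIdeal (i : Fin n) : (X i : MvPolynomial (Fin n) ℂ) ^ n ∈ esymmIdeal n := by
  have h := congrArg (Polynomial.eval (-X i)) (prod_C_add_X_eq_sum_esymm ℂ (Fin n))
  rw [Polynomial.eval_prod, Finset.prod_eq_zero (Finset.mem_univ i) (by simp),
    Polynomial.eval_finsetSum, Finset.sum_range_succ', Fintype.card_fin] at h
  -- evaluating `∏ (T + X j)` at `T = -X i` writes `(-X i) ^ n` through `e₁, …, eₙ`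
  simp only [Polynomial.eval_mul, Polynomial.eval_C, Polynomial.eval_pow, Polynomial.eval_X,
    esymm_zero, one_mul, Nat.sub_zero] at h
  have h2 : (-X i : MvPolynomial (Fin n) ℂ) ^ n ∈ esymmIdeal n := by
    rw [← neg_eq_of_add_eq_zero_right h.symm]
    refine neg_mem (sum_mem fun k hk => Ideal.mul_mem_right _ _ ?_)
    exact esymm_mem_esymmIdeal (by omega) (by have := Finset.mem_range.1 hk; omega)
  rw [neg_pow] at h2
  have h3 := Ideal.mul_mem_left _ ((-1 : MvPolynomial (Fin n) ℂ) ^ n) h2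
  rwa [← mul_assoc, ← mul_pow, neg_one_mul, neg_neg, one_pow, one_mul] at h3

/-- Modulo the ideal, every symmetric polynomial is a constant. -/
theorem sub_C_mem_esymmIdeal {g : MvPolynomial (Fin n) ℂ} (hg : g.IsSymmetric) :
    ∃ c : ℂ, g - C c ∈ esymmIdeal n := by
  obtain ⟨q, hq⟩ := esymmAlgHom_surjective (σ := Fin n) (n := n) ℂ (by simp) ⟨g, hg⟩
  have hq' : aeval (fun i : Fin n ↦ esymm (Fin n) ℂ (i + 1)) q = g := by
    rw [← esymmAlgHom_apply, hq]
  refine ⟨constantCoeff q, ?_⟩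
  rw [← Ideal.Quotient.eq, ← hq']
  change Ideal.Quotient.mkₐ ℂ (esymmIdeal n) _ = Ideal.Quotient.mkₐ ℂ (esymmIdeal n) _
  have h0 : (fun i : Fin n => Ideal.Quotient.mkₐ ℂ (esymmIdeal n) (esymm (Fin n) ℂ (i + 1))) =
      fun _ => 0 := by
    funext i
    exact Ideal.Quotient.eq_zero_iff_mem.2 (esymm_mem_esymmIdeal (by omega) (by omega))
  rw [comp_aeval_apply, h0, aeval_zero', ← algebraMap_eq, AlgHom.commutes]

theorem rename_mem_esymmIdeal (σ : Equiv.Perm (Fin n)) {f : MvPolynomial (Fin n) ℂ}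
    (hf : f ∈ esymmIdeal n) : rename σ f ∈ esymmIdeal n := by
  have : esymmIdeal n ≤ (esymmIdeal n).comap (rename σ) := by
    refine Ideal.span_le.2 ?_
    rintro _ ⟨k, hk, rfl⟩
    change rename σ (esymm (Fin n) ℂ k) ∈ esymmIdeal n
    rw [rename_esymm]
    exact esymm_mem_esymmIdeal hk.1 hk.2
  exact this hf

/-- The divided difference `f ↦ (f - s f) / (X i - X j)`, with `s` the swap of `i` and `j`,
preserves the ideal. -/
theorem exists_dividedDifference_mem (i j : Fin n) {f : MvPolynomial (Fin n) ℂ}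
    (hf : f ∈ esymmIdeal n) :
    ∃ g ∈ esymmIdeal n, f - rename (Equiv.swap i j) f = (X i - X j) * g := by
  have hf' := hf
  rw [esymmIdeal] at hf'
  induction hf' using Submodule.span_induction with
  | mem x hx =>
    obtain ⟨k, hk, rfl⟩ := hx
    exact ⟨0, zero_mem _, by simp [rename_esymm]⟩
  | zero => exact ⟨0, zero_mem _, by simp⟩
  | add x y hx hy ihx ihy =>
    obtain ⟨a, ha, ha'⟩ := ihx hx
    obtain ⟨b, hb, hb'⟩ := ihy hy
    exact ⟨a + b, add_mem ha hb, by rw [map_add]; linear_combination ha' + hb'⟩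
  | smul r x hx ihx =>
    obtain ⟨a, ha, ha'⟩ := ihx hx
    obtain ⟨b, hb⟩ := X_sub_X_dvd_sub_swap i j r
    refine ⟨r * a + b * rename (Equiv.swap i j) x, add_mem (Ideal.mul_mem_left _ _ ha)
      (Ideal.mul_mem_left _ _ (rename_mem_esymmIdeal _ hx)), ?_⟩
    rw [smul_eq_mul, map_mul]
    linear_combination r * ha' + rename (Equiv.swap i j) x * hb

/-- A class killed by all variables is alternating modulo the ideal: apply the divided
difference to `(X i - X j) * f`. -/
theorem add_swap_mem_esymmIdeal {f : MvPolynomial (Fin n) ℂ}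
    (hf : ∀ i, X i * f ∈ esymmIdeal n) {i j : Fin n} (hij : i ≠ j) :
    f + rename (Equiv.swap i j) f ∈ esymmIdeal n := by
  have h1 : (X i - X j) * f ∈ esymmIdeal n := by
    rw [sub_mul]; exact sub_mem (hf i) (hf j)
  obtain ⟨g, hg, hg'⟩ := exists_dividedDifference_mem i j h1
  have : f + rename (Equiv.swap i j) f = g := by
    apply mul_left_cancel₀ (X_sub_X_ne_zero hij)
    rw [← hg', map_mul, map_sub, rename_X, rename_X, Equiv.swap_apply_left,
      Equiv.swap_apply_right]
    ring
  rwa [this]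

/-- The alternating sum of the permutations of `f`. -/
noncomputable def antisymmetrize (f : MvPolynomial (Fin n) ℂ) : MvPolynomial (Fin n) ℂ :=
  ∑ σ : Equiv.Perm (Fin n), (Equiv.Perm.sign σ : ℤ) • rename σ f

theorem isAlternatingPoly_antisymmetrize (f : MvPolynomial (Fin n) ℂ) :
    IsAlternatingPoly (antisymmetrize f) := by
  intro i j hij
  rw [antisymmetrize, map_sum, ← Finset.sum_neg_distrib]
  refine Fintype.sum_equiv (Equiv.mulLeft (Equiv.swap i j)) _ _ fun σ => ?_
  rw [map_zsmul, rename_rename, Equiv.coe_mulLeft, Equiv.Perm.sign_mul,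
    Equiv.Perm.sign_swap hij, Equiv.Perm.coe_mul]
  simp

theorem factorial_smul_sub_antisymmetrize_mem {f : MvPolynomial (Fin n) ℂ}
    (hf : ∀ i j, i ≠ j → f + rename (Equiv.swap i j) f ∈ esymmIdeal n) :
    n.factorial • f - antisymmetrize f ∈ esymmIdeal n := by
  have key : ∀ σ : Equiv.Perm (Fin n),
      f - (Equiv.Perm.sign σ : ℤ) • rename σ f ∈ esymmIdeal n := by
    intro σ
    induction σ using Equiv.Perm.swap_induction_on with
    | one => simp
    | swap_mul σ i j hij ih =>
      have h1 := sub_mem (hf i j hij) (rename_mem_esymmIdeal (Equiv.swap i j) ih)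
      rw [map_sub, map_zsmul, rename_rename] at h1
      rw [Equiv.Perm.sign_mul, Equiv.Perm.sign_swap hij, Equiv.Perm.coe_mul]
      convert! h1 using 1
      rw [Units.val_mul, Units.val_neg, Units.val_one, neg_one_mul, neg_smul]
      abel
  have := sum_mem (t := Finset.univ) fun σ _ => key σ
  rw [Finset.sum_sub_distrib, Finset.sum_const, Finset.card_univ, Fintype.card_perm,
    Fintype.card_fin] at this
  exact this

theorem isSymmetric_of_isAlternatingPoly_mul {g : MvPolynomial (Fin n) ℂ}
    (h : IsAlternatingPoly (vandermondePoly n * g)) : g.IsSymmetric := by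
  intro σ
  induction σ using Equiv.Perm.swap_induction_on with
  | one => simp
  | swap_mul σ i j hij ih =>
    rw [Equiv.Perm.coe_mul, ← rename_rename, ih]
    have h1 := h i j hij
    rw [map_mul, isAlternatingPoly_vandermondePoly n i j hij, neg_mul, neg_inj] at h1
    exact mul_left_cancel₀ (vandermondePoly_ne_zero n) h1

/-- If all variables kill `f` modulo the ideal, then `n! f` is congruent to its
antisymmetrization `V * g`, hence to a scalar multiple `c V` of `V`; since `V(∂)V ≠ 0`, the condition
`f(∂)V = 0` forces `c = 0`. -/
theorem mem_esymmIdeal_of_X_mul_mem {f : MvPolynomial (Fin n) ℂ} (hJ : f ∈ annVandermonde n)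
    (hf : ∀ i, X i * f ∈ esymmIdeal n) : f ∈ esymmIdeal n := by
  have h1 := factorial_smul_sub_antisymmetrize_mem fun i j hij => add_swap_mem_esymmIdeal hf hij
  obtain ⟨g, hg⟩ := vandermondePoly_dvd (isAlternatingPoly_antisymmetrize f)
  have hsymm : g.IsSymmetric :=
    isSymmetric_of_isAlternatingPoly_mul (hg ▸ isAlternatingPoly_antisymmetrize f)
  obtain ⟨c, hc⟩ := sub_C_mem_esymmIdeal hsymm
  have h2 : n.factorial • f - C c * vandermondePoly n ∈ esymmIdeal n := by
    have := add_mem h1 (Ideal.mul_mem_left _ (vandermondePoly n) hc)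
    rw [hg] at this
    convert this using 1
    ring
  have h3 : C c * vandermondePoly n ∈ annVandermonde n := by
    have := sub_mem (nsmul_mem hJ n.factorial) (esymmIdeal_le_annVandermonde n h2)
    rwa [sub_sub_cancel] at this
  have hc0 : c = 0 := by
    rw [mem_annVandermonde, diffOp_mul] at h3
    by_contra hc0
    -- multiplying the operator by the inverse constant recovers `V(∂)V = 0`
    have h5 : vandermondePoly n ∈ annVandermonde n := by
      have := Ideal.mul_mem_left _ (C c⁻¹) (show C c * vandermondePoly n ∈ annVandermonde n by
        rw [mem_annVandermonde, diffOp_mul, h3])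
      rwa [← mul_assoc, ← C_mul, inv_mul_cancel₀ hc0, C_1, one_mul] at this
    apply coeff_zero_diffOp_vandermondePoly n
    rw [mem_annVandermonde.1 h5, coeff_zero]
  rw [hc0, C_0, zero_mul, sub_zero] at h2
  have h6 := Ideal.mul_mem_left _ (C (n.factorial : ℂ)⁻¹) h2
  rwa [nsmul_eq_mul, ← mul_assoc, ← map_natCast (C : ℂ →+* MvPolynomial (Fin n) ℂ), ← C_mul,
    inv_mul_cancel₀ (Nat.cast_ne_zero.2 n.factorial_ne_zero), C_1, one_mul] at h6

theorem annVandermonde_le_esymmIdeal (n : ℕ) : annVandermonde n ≤ esymmIdeal n := by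
  let M : Ideal (MvPolynomial (Fin n) ℂ) := Ideal.span (Set.range X)
  obtain ⟨N, hN⟩ : ∃ N : ℕ, M ^ N ≤ esymmIdeal n := by
    refine Ideal.exists_pow_le_of_le_radical_of_fg ?_
      (Submodule.fg_span (Set.finite_range _))
    refine Ideal.span_le.2 ?_
    rintro _ ⟨i, rfl⟩
    exact ⟨n, X_pow_mem_esymmIdeal i⟩
  -- peel off one variable at a time, starting from `M ^ N * f ⊆ esymmIdeal n`
  have key : ∀ k : ℕ, ∀ f ∈ annVandermonde n, (∀ g ∈ M ^ k, g * f ∈ esymmIdeal n) →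
      f ∈ esymmIdeal n := by
    intro k
    induction k with
    | zero =>
      intro f _ h
      simpa using h 1 (by simp)
    | succ k ih =>
      intro f hf h
      refine mem_esymmIdeal_of_X_mul_mem hf fun i => ih _ (Ideal.mul_mem_left _ _ hf) ?_
      intro g hg
      rw [← mul_assoc]
      refine h _ ?_
      rw [pow_succ]
      exact Ideal.mul_mem_mul hg (Ideal.subset_span ⟨i, rfl⟩)
  exact fun f hf => key N f hf fun g hg => Ideal.mul_mem_right _ _ (hN hg)

end Coinvariants

/-- `{f : f(∂)V = 0}` is exactly the ideal generated by the elementary symmetric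
polynomials `e₁, …, eₙ`. -/
theorem stmt14 (n : ℕ) :
    {f : MvPolynomial (Fin n) ℂ | diffOp f (vandermondePoly n) = 0} =
      (Ideal.span ((fun k => MvPolynomial.esymm (Fin n) ℂ k) '' Set.Icc 1 n) :
        Set (MvPolynomial (Fin n) ℂ)) :=
  congrArg (fun K : Ideal (MvPolynomial (Fin n) ℂ) => (K : Set (MvPolynomial (Fin n) ℂ)))
    (le_antisymm (annVandermonde_le_esymmIdeal n) (esymmIdeal_le_annVandermonde n))
end

section
/- Let I be the ideal of ℂ[Z_1,…,Z_n] generated by the elementary symmetric polynomials e_1,…,e_n. Then the coinvariant algebra ℂ[Z_1,…,Z_n]/I is a finite-dimensional ℂ-vector space of dimension exactly n!. -/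
/-! The coinvariant algebra is the universal ring over `ℂ` in which `X ^ n` splits as
`∏ (X - zᵢ)`: by Vieta, killing `e₁, …, eₙ` is the same as imposing this factorisation on the
variables. More generally, for every monic `p` of degree `n` over a nontrivial commutative ring `R`
there is a universal `R`-algebra splitting `p`, and it is free of rank `n!`
(`exists_isUniversalSplitting`). It is built by adjoining one root `z` of `p`, which gives a free
algebra of rank `n`, and then splitting the quotient of `p` by `X - z`, of degree `n - 1`,
universally over that algebra. Comparing universal properties for `p = X ^ n` gives the theorem. -/

open MvPolynomial

/-- `A`, with the elements `z i`, is the universal `R`-algebra over which `p` factors as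
`∏ i, (X - z i)`. The universal property is stated for ring homomorphisms out of `R`, so that no
algebra structure on the target is needed, and for targets in a fixed universe. -/
structure IsUniversalSplitting {R A : Type} [CommRing R] [CommRing A] [Algebra R A] {n : ℕ}
    (p : Polynomial R) (z : Fin n → A) : Prop where
  split : p.map (algebraMap R A) = ∏ i, (Polynomial.X - Polynomial.C (z i))
  lift : ∀ (S : Type) [CommRing S] (φ : R →+* S) (s : Fin n → S),
    p.map φ = ∏ i, (Polynomial.X - Polynomial.C (s i)) →
      ∃ f : A →+* S, f.comp (algebraMap R A) = φ ∧ ∀ i, f (z i) = s i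
  ext : ∀ (S : Type) [CommRing S] (f g : A →+* S),
    f.comp (algebraMap R A) = g.comp (algebraMap R A) → (∀ i, f (z i) = g (z i)) → f = g

/-- By induction on the degree: if `p` has degree `n + 1`, then over `AdjoinRoot p` one has
`p = (X - root p) * q`, and a universal splitting of `q` over `AdjoinRoot p` is a universal
splitting of `p` over `R`, of rank `(n + 1) * n!`. -/
theorem exists_isUniversalSplitting (n : ℕ) : ∀ (R : Type) [CommRing R] [Nontrivial R]
    (p : Polynomial R), p.Monic → p.natDegree = n →
    ∃ (A : Type) (_ : CommRing A) (_ : Algebra R A) (z : Fin n → A),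
      IsUniversalSplitting p z ∧ Module.Finite R A ∧ Module.Free R A ∧
        Module.finrank R A = n.factorial := by
  induction n with
  | zero =>
    intro R _ _ p hp hn
    obtain rfl : p = 1 := hp.natDegree_eq_zero.mp hn
    refine ⟨R, inferInstance, inferInstance, Fin.elim0, ⟨by simp, ?_, ?_⟩, inferInstance,
      inferInstance, by simp⟩
    · intro S _ φ s _
      exact ⟨φ, by ext; simp, fun i => i.elim0⟩
    · intro S _ f g h _
      simpa using h
  | succ n ih =>
    intro R _ _ p hp hn
    have hfin : Module.Finite R (AdjoinRoot p) := hp.finite_adjoinRoot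
    have hfree : Module.Free R (AdjoinRoot p) := hp.free_adjoinRoot
    have hrank : Module.finrank R (AdjoinRoot p) = n + 1 := by
      rw [(AdjoinRoot.powerBasis' hp).finrank, AdjoinRoot.powerBasis'_dim, hn]
    have hnt : Nontrivial (AdjoinRoot p) :=
      Module.nontrivial_of_finrank_pos (R := R) (by omega)
    obtain ⟨q, hq⟩ : ∃ q, (Polynomial.X - Polynomial.C (AdjoinRoot.root p)) * q =
        p.map (AdjoinRoot.of p) :=
      ⟨_, Polynomial.mul_divByMonic_eq_iff_isRoot.mpr (AdjoinRoot.isRoot_root p)⟩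
    have hqm : q.Monic := (Polynomial.monic_X_sub_C _).of_mul_monic_left (hq ▸ hp.map _)
    have hqd : q.natDegree = n := by
      have h := (Polynomial.monic_X_sub_C (AdjoinRoot.root p)).natDegree_mul hqm
      rw [hq, hp.natDegree_map, hn, Polynomial.natDegree_X_sub_C] at h
      omega
    obtain ⟨A, _, _, z, hz, _, _, hA⟩ := ih (AdjoinRoot p) q hqm hqd
    let _ : Algebra R A := ((algebraMap (AdjoinRoot p) A).comp (AdjoinRoot.of p)).toAlgebra
    have hmap : algebraMap R A = (algebraMap (AdjoinRoot p) A).comp (AdjoinRoot.of p) := rfl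
    have : IsScalarTower R (AdjoinRoot p) A := IsScalarTower.of_algebraMap_eq fun _ => rfl
    refine ⟨A, inferInstance, inferInstance,
      Fin.cons (algebraMap (AdjoinRoot p) A (AdjoinRoot.root p)) z, ⟨?_, ?_, ?_⟩,
      Module.Finite.trans (AdjoinRoot p) A, Module.Free.trans (S := AdjoinRoot p), ?_⟩
    · rw [hmap, ← Polynomial.map_map, ← hq, Polynomial.map_mul, hz.split, Fin.prod_univ_succ]
      simp
    · intro S _ φ s hs
      rw [Fin.prod_univ_succ] at hs
      have h0 : p.eval₂ φ (s 0) = 0 := by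
        rw [← Polynomial.eval_map, hs]
        simp
      have hψ : (AdjoinRoot.lift φ (s 0) h0).comp (AdjoinRoot.of p) = φ :=
        AdjoinRoot.lift_comp_of h0
      -- The monic factor `X - s 0` is regular, so it cancels from the two factorisations of `p`.
      obtain ⟨f, hf, hfz⟩ := hz.lift S (AdjoinRoot.lift φ (s 0) h0) (fun i => s i.succ) (by
        apply (Polynomial.monic_X_sub_C (s 0)).isRegular.left
        have h := congrArg (Polynomial.map (AdjoinRoot.lift φ (s 0) h0)) hq
        rw [Polynomial.map_map, hψ, hs] at h
        simpa using h)
      refine ⟨f, by rw [hmap, ← RingHom.comp_assoc, hf, hψ], fun i => ?_⟩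
      refine Fin.cases ?_ (fun i => ?_) i
      · have := congrArg (fun g => g (AdjoinRoot.root p)) hf
        simpa using this
      · simpa using hfz i
    · intro S _ f g hfg hzz
      refine hz.ext S f g (AdjoinRoot.ringHom_ext ?_ ?_) fun i => by simpa using hzz i.succ
      · rw [RingHom.comp_assoc, RingHom.comp_assoc]
        exact hfg
      · simpa using hzz 0
    · rw [← Module.finrank_mul_finrank R (AdjoinRoot p) A, hrank, hA, Nat.factorial_succ]

/-- Vieta: the product `∏ (X - z i)` equals `X ^ n` exactly when every `eₖ`, `1 ≤ k ≤ n`, vanishes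
at `z`. -/
theorem prod_X_sub_C_eq_X_pow_iff {A : Type} [CommRing A] [Algebra ℂ A] {n : ℕ} (z : Fin n → A) :
    ∏ i, (Polynomial.X - Polynomial.C (z i)) = (Polynomial.X ^ n : Polynomial A) ↔
      ∀ k ∈ Set.Icc 1 n, aeval z (esymm (Fin n) ℂ k) = 0 := by
  have key : ∀ k ≤ n, (∏ i, (Polynomial.X - Polynomial.C (z i))).coeff k =
      (-1) ^ (n - k) * aeval z (esymm (Fin n) ℂ (n - k)) := by
    intro k hk
    have h := Multiset.prod_X_sub_C_coeff (Finset.univ.val.map z) (k := k) (by simpa using hk)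
    have hc : (Finset.univ.val.map z).card = n := by simp
    rw [Multiset.map_map, hc] at h
    rw [aeval_esymm_eq_multiset_esymm]
    exact h
  constructor
  · rintro h k ⟨h1, h2⟩
    have h3 := key (n - k) (Nat.sub_le _ _)
    rw [h, Polynomial.coeff_X_pow, if_neg (by omega), Nat.sub_sub_self h2] at h3
    exact ((isUnit_one.neg.pow k).mul_right_eq_zero).mp h3.symm
  · intro h
    ext k
    rw [Polynomial.coeff_X_pow]
    rcases lt_trichotomy k n with hk | rfl | hk
    · rw [key k hk.le, h _ ⟨by omega, by omega⟩, mul_zero, if_neg hk.ne]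
    · simp [key k le_rfl]
    · rw [if_neg hk.ne']
      apply Polynomial.coeff_eq_zero_of_natDegree_lt
      refine lt_of_le_of_lt (Polynomial.natDegree_prod_le _ _) (lt_of_le_of_lt ?_ hk)
      refine (Finset.sum_le_card_nsmul _ _ 1 fun i _ => ?_).trans (by simp)
      exact Polynomial.natDegree_X_sub_C_le _

/-- The coinvariant algebra `ℂ[Z₁,…,Zₙ]/(e₁,…,eₙ)` is a ℂ-vector space of dimension
exactly `n!`. -/
theorem stmt15 (n : ℕ) :
    FiniteDimensional ℂ (MvPolynomial (Fin n) ℂ ⧸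
        Ideal.span ((fun k => MvPolynomial.esymm (Fin n) ℂ k) '' Set.Icc 1 n)) ∧
      Module.finrank ℂ (MvPolynomial (Fin n) ℂ ⧸
        Ideal.span ((fun k => MvPolynomial.esymm (Fin n) ℂ k) '' Set.Icc 1 n)) =
        n.factorial := by
  set I := Ideal.span ((fun k => MvPolynomial.esymm (Fin n) ℂ k) '' Set.Icc 1 n) with hI
  obtain ⟨A, _, _, z, hz, hfin, -, hrank⟩ := exists_isUniversalSplitting n ℂ
    (Polynomial.X ^ n) (Polynomial.monic_X_pow n) (Polynomial.natDegree_X_pow n)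
  have hzA := (prod_X_sub_C_eq_X_pow_iff z).mp (by rw [← hz.split]; simp)
  let g : (MvPolynomial (Fin n) ℂ ⧸ I) →ₐ[ℂ] A := Ideal.Quotient.liftₐ I (aeval z) (by
    intro a ha
    have hle : I ≤ RingHom.ker (aeval (R := ℂ) z) := by
      rw [hI, Ideal.span_le]
      rintro _ ⟨k, hk, rfl⟩
      exact hzA k hk
    exact hle ha)
  have hgX : ∀ i, g (Ideal.Quotient.mkₐ ℂ I (X i)) = z i := fun i =>
    (Ideal.Quotient.lift_mk _ _ _).trans (aeval_X z i)
  have hB := (prod_X_sub_C_eq_X_pow_iff (fun i => Ideal.Quotient.mkₐ ℂ I (X i))).mpr (by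
    intro k hk
    have h : aeval (fun i => Ideal.Quotient.mkₐ ℂ I (X i)) = Ideal.Quotient.mkₐ ℂ I := by
      ext i
      simp
    rw [h]
    exact Ideal.Quotient.eq_zero_iff_mem.mpr (Ideal.subset_span ⟨k, hk, rfl⟩))
  obtain ⟨f, hf, hfz⟩ := hz.lift (MvPolynomial (Fin n) ℂ ⧸ I) (algebraMap ℂ _) _
    (by rw [hB]; simp)
  let f' : A →ₐ[ℂ] (MvPolynomial (Fin n) ℂ ⧸ I) := ⟨f, fun r => congrArg (fun h => h r) hf⟩
  have hf'z : ∀ i, f' (z i) = Ideal.Quotient.mkₐ ℂ I (X i) := hfz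
  have h1 : g.comp f' = AlgHom.id ℂ A := by
    have h := hz.ext A (g.comp f').toRingHom (RingHom.id A)
      (by rw [RingHom.id_comp]; exact (g.comp f').comp_algebraMap) (fun i => by
        exact (congrArg g (hf'z i)).trans (hgX i))
    exact AlgHom.ext fun a => congrArg (fun h => h a) h
  have h2 : f'.comp g = AlgHom.id ℂ _ := by
    apply Ideal.Quotient.algHom_ext
    apply MvPolynomial.algHom_ext
    intro i
    exact (congrArg f' (hgX i)).trans (hf'z i)
  let e : A ≃ₗ[ℂ] (MvPolynomial (Fin n) ℂ ⧸ I) := (AlgEquiv.ofAlgHom f' g h2 h1).toLinearEquiv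
  exact ⟨Module.Finite.equiv e, by rw [← e.finrank_eq, hrank]⟩
end

section
/- Let W be a group, and let A and B be commutative ℂ-algebras equipped with ℕ-gradings A = ⊕_i A_i and B = ⊕_i B_i and with W-actions by ℂ-algebra automorphisms that preserve the gradings. Let φ : A → B be a surjective W-equivariant ℂ-algebra homomorphism with φ(A_i) ⊆ B_i for all i. Fix d ∈ ℕ and assume: (i) A_i = 0 for all i > d; (ii) for every i and every nonzero homogeneous element x ∈ A_i there exists y ∈ A with x·y a nonzero element of A_d; (iii) A_d is irreducible as a ℂ-linear W-representation, i.e. its only W-stable ℂ-subspaces are 0 and A_d; (iv) B_d ≠ 0. Then φ is injective. -/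
/-!
Since `φ` is graded, its kernel is a homogeneous ideal, so it suffices to show that the kernel
contains no nonzero homogeneous element. The degree-`d` part `ker φ ⊓ 𝒜 d` of the kernel is
`W`-stable, and it is not all of `𝒜 d`: by surjectivity and gradedness `φ` maps `𝒜 d` onto
`ℬ d ≠ 0`. By irreducibility it vanishes. A nonzero homogeneous element of the kernel would have
a nonzero multiple in `𝒜 d`, which would again lie in the kernel.
-/

/-- A degree-preserving homomorphism commutes with taking homogeneous components. -/
theorem map_decompose_of_graded {A B : Type*} [CommRing A] [CommRing B]
    [Algebra ℂ A] [Algebra ℂ B] (𝒜 : ℕ → Submodule ℂ A) (ℬ : ℕ → Submodule ℂ B)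
    [GradedAlgebra 𝒜] [GradedAlgebra ℬ] (φ : A →ₐ[ℂ] B)
    (hgraded : ∀ i : ℕ, (𝒜 i).map φ.toLinearMap ≤ ℬ i) (a : A) (i : ℕ) :
    φ (DirectSum.decompose 𝒜 a i : A) = (DirectSum.decompose ℬ (φ a) i : B) := by
  induction a using DirectSum.Decomposition.inductionOn 𝒜 with
  | zero => simp
  | @homogeneous j m =>
    have hm : φ (m : A) ∈ ℬ j := hgraded j ⟨m, m.2, rfl⟩
    by_cases h : j = i
    · subst h
      rw [DirectSum.decompose_of_mem_same 𝒜 m.2, DirectSum.decompose_of_mem_same ℬ hm]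
    · rw [DirectSum.decompose_of_mem_ne 𝒜 m.2 h, DirectSum.decompose_of_mem_ne ℬ hm h, map_zero]
  | add x y hx hy => simp [DirectSum.decompose_add, hx, hy]


/-- An abstract form of Proposition 2 (the characterization of `H^*(X_σ)`):
if `A`, `B` are ℕ-graded commutative ℂ-algebras with grade-preserving actions of a
group `W`, `φ : A → B` is a surjective `W`-equivariant graded algebra homomorphism,
and for some `d`: (i) `A` vanishes in degrees `> d`; (ii) every nonzero homogeneous
element of `A` multiplies into a nonzero element of top degree `d`; (iii) the degree-`d`
part of `A` is an irreducible `W`-representation; (iv) the degree-`d` part of `B` is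
nonzero — then `φ` is injective. -/
theorem stmt16 {W : Type*} [Group W] {A B : Type*} [CommRing A] [CommRing B]
    [Algebra ℂ A] [Algebra ℂ B]
    (𝒜 : ℕ → Submodule ℂ A) (ℬ : ℕ → Submodule ℂ B)
    [GradedAlgebra 𝒜] [GradedAlgebra ℬ]
    (ρA : W →* (A ≃ₐ[ℂ] A)) (ρB : W →* (B ≃ₐ[ℂ] B))
    (hρA : ∀ (w : W) (i : ℕ), Submodule.map (ρA w).toLinearMap (𝒜 i) = 𝒜 i)
    (hρB : ∀ (w : W) (i : ℕ), Submodule.map (ρB w).toLinearMap (ℬ i) = ℬ i)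
    (φ : A →ₐ[ℂ] B) (hsurj : Function.Surjective φ)
    (hequiv : ∀ (w : W) (a : A), φ (ρA w a) = ρB w (φ a))
    (hgraded : ∀ i : ℕ, (𝒜 i).map φ.toLinearMap ≤ ℬ i)
    (d : ℕ)
    (h1 : ∀ i : ℕ, d < i → 𝒜 i = ⊥)
    (h2 : ∀ (i : ℕ) (x : A), x ∈ 𝒜 i → x ≠ 0 → ∃ y : A, x * y ∈ 𝒜 d ∧ x * y ≠ 0)
    (h3 : ∀ V : Submodule ℂ A, V ≤ 𝒜 d →
      (∀ w : W, V.map (ρA w).toLinearMap ≤ V) → V = ⊥ ∨ V = 𝒜 d)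
    (h4 : ℬ d ≠ ⊥) :
    Function.Injective φ := by
  have hbot : LinearMap.ker φ.toLinearMap ⊓ 𝒜 d = ⊥ := by
    refine (h3 _ inf_le_right fun w => ?_).resolve_right fun htop => h4 ?_
    · rintro _ ⟨x, ⟨hx, hxd⟩, rfl⟩
      have hx0 : φ x = 0 := hx
      refine ⟨?_, hρA w d ▸ Submodule.mem_map_of_mem hxd⟩
      change φ (ρA w x) = 0
      rw [hequiv, hx0, map_zero]
    · refine (Submodule.eq_bot_iff _).2 fun b hb => ?_
      obtain ⟨a, rfl⟩ := hsurj b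
      have hmem : (DirectSum.decompose 𝒜 a d : A) ∈ LinearMap.ker φ.toLinearMap ⊓ 𝒜 d :=
        htop.ge (DirectSum.decompose 𝒜 a d).2
      rw [← DirectSum.decompose_of_mem_same ℬ hb, ← map_decompose_of_graded 𝒜 ℬ φ hgraded]
      exact hmem.1
  refine (injective_iff_map_eq_zero φ).2 fun a ha => ?_
  have hcomp : ∀ i, (DirectSum.decompose 𝒜 a i : A) = 0 := by
    intro i
    by_contra hne
    obtain ⟨y, hyd, hy0⟩ := h2 i _ (DirectSum.decompose 𝒜 a i).2 hne
    have hker : φ (DirectSum.decompose 𝒜 a i : A) = 0 := by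
      rw [map_decompose_of_graded 𝒜 ℬ φ hgraded, ha]
      simp
    have hmem : (DirectSum.decompose 𝒜 a i : A) * y ∈ LinearMap.ker φ.toLinearMap ⊓ 𝒜 d := by
      refine ⟨?_, hyd⟩
      change φ (_ * y) = 0
      rw [map_mul, hker, zero_mul]
    rw [hbot] at hmem
    exact hy0 hmem
  classical
  rw [← DirectSum.sum_support_decompose 𝒜 a]
  exact Finset.sum_eq_zero fun i _ => hcomp i
end
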